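/- arXiv:2201.07169 — 5 statements merged into one kernel-verified Lean document; each statement's English description precedes it below -/
import Mathlib

section
/- For every R > 0 there exists a constant C > 0 such that for all x, y ∈ (0, R) with x ≠ y one has |T₁(x,y)| ≤ C·x·y. -/
open MeasureTheory Real Set

/-- `T₁(x,y) = (y/x)·(1/sinh|x²−y²| − 1/|x²−y²| − 1/sinh(x²+y²) + 1/(x²+y²))`. -/
noncomputable def T1 (x y : ℝ) : ℝ :=
  (y / x) * (1 / Real.sinh |x ^ 2 - y ^ 2| - 1 / |x ^ 2 - y ^ 2|
    - 1 / Real.sinh (x ^ 2 + y ^ 2) + 1 / (x ^ 2 + y ^ 2))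

theorem sinh_le_mul_cosh {u : ℝ} (hu : 0 ≤ u) : Real.sinh u ≤ u * Real.cosh u := by
  have hderiv : ∀ t : ℝ,
      HasDerivAt (fun s => s * Real.cosh s - Real.sinh s) (t * Real.sinh t) t := fun t => by
    refine (((hasDerivAt_id t).mul (Real.hasDerivAt_cosh t)).sub
      (Real.hasDerivAt_sinh t)).congr_deriv ?_
    simp
  have hmono : MonotoneOn (fun s => s * Real.cosh s - Real.sinh s) (Ici 0) := by
    refine monotoneOn_of_hasDerivWithinAt_nonneg (convex_Ici 0)
      (fun t _ => (hderiv t).continuousAt.continuousWithinAt)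
      (fun t _ => (hderiv t).hasDerivWithinAt) fun t ht => ?_
    rw [interior_Ici] at ht
    exact mul_nonneg (le_of_lt ht) (Real.sinh_nonneg_iff.2 (le_of_lt ht))
  simpa using hmono self_mem_Ici hu hu

theorem hasDerivAt_inv_sinh_sub_inv {u : ℝ} (hu : 0 < u) :
    HasDerivAt (fun t => 1 / Real.sinh t - 1 / t)
      (1 / u ^ 2 - Real.cosh u / Real.sinh u ^ 2) u := by
  have hs : Real.sinh u ≠ 0 := (Real.sinh_pos_iff.2 hu).ne'
  simp only [one_div]
  refine (((Real.hasDerivAt_sinh u).inv hs).sub (hasDerivAt_inv hu.ne')).congr_deriv ?_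
  ring

theorem abs_deriv_inv_sinh_sub_inv_le_one {u : ℝ} (hu : 0 < u) :
    |1 / u ^ 2 - Real.cosh u / Real.sinh u ^ 2| ≤ 1 := by
  have hs : 0 < Real.sinh u := Real.sinh_pos_iff.2 hu
  have hc : 1 ≤ Real.cosh u := Real.one_le_cosh u
  have hsq : Real.cosh u ^ 2 = Real.sinh u ^ 2 + 1 := Real.cosh_sq u
  have hle : u ^ 2 ≤ Real.sinh u ^ 2 := by
    gcongr
    exact Real.self_le_sinh_iff.2 hu.le
  have hge : Real.sinh u ^ 2 ≤ u ^ 2 * Real.cosh u ^ 2 := by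
    rw [← mul_pow]
    gcongr
    exact sinh_le_mul_cosh hu.le
  have hcosh : Real.cosh u ≤ Real.sinh u ^ 2 + 1 := by nlinarith
  have hmul : u ^ 2 * Real.cosh u ≤ u ^ 2 * (Real.sinh u ^ 2 + 1) := by gcongr
  have hone : u ^ 2 * 1 ≤ u ^ 2 * Real.cosh u := by gcongr
  rw [hsq] at hge
  rw [div_sub_div _ _ (by positivity) (by positivity), abs_div,
    abs_of_pos (by positivity : 0 < u ^ 2 * Real.sinh u ^ 2), div_le_one (by positivity), abs_le]
  constructor <;> linarith

theorem abs_inv_sinh_sub_inv_sub_le {a b : ℝ} (ha : 0 < a) (hb : 0 < b) :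
    |(1 / Real.sinh a - 1 / a) - (1 / Real.sinh b - 1 / b)| ≤ |a - b| := by
  simpa using (convex_Ioi (0 : ℝ)).norm_image_sub_le_of_norm_hasDerivWithin_le
    (fun t ht => (hasDerivAt_inv_sinh_sub_inv ht).hasDerivWithinAt)
    (fun t ht => abs_deriv_inv_sinh_sub_inv_le_one ht) hb ha

theorem T1_bound_small (R : ℝ) (hR : 0 < R) :
    ∃ C : ℝ, 0 < C ∧ ∀ x y : ℝ, x ∈ Set.Ioo (0 : ℝ) R → y ∈ Set.Ioo (0 : ℝ) R →
      x ≠ y → |T1 x y| ≤ C * x * y := by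
  refine ⟨2, two_pos, fun x y ⟨hx, _⟩ ⟨hy, _⟩ hxy => ?_⟩
  have hne : x ^ 2 - y ^ 2 ≠ 0 := fun h =>
    hxy ((sq_eq_sq₀ hx.le hy.le).1 (sub_eq_zero.1 h))
  have hgap : |(|x ^ 2 - y ^ 2|) - (x ^ 2 + y ^ 2)| ≤ 2 * x ^ 2 := by
    have hle : |x ^ 2 - y ^ 2| ≤ x ^ 2 + y ^ 2 :=
      abs_le.2 ⟨by nlinarith, by nlinarith⟩
    rw [abs_of_nonpos (by linarith)]
    linarith [neg_abs_le (x ^ 2 - y ^ 2)]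
  have hlip := abs_inv_sinh_sub_inv_sub_le (abs_pos.2 hne) (by positivity : 0 < x ^ 2 + y ^ 2)
  calc |T1 x y| = y / x * |(1 / Real.sinh |x ^ 2 - y ^ 2| - 1 / |x ^ 2 - y ^ 2|)
        - (1 / Real.sinh (x ^ 2 + y ^ 2) - 1 / (x ^ 2 + y ^ 2))| := by
        rw [T1, abs_mul, abs_of_pos (div_pos hy hx)]
        congr 2
        ring
    _ ≤ y / x * (2 * x ^ 2) := by
        gcongr
        exact hlip.trans hgap
    _ = 2 * x * y := by
        field_simp
end

section
/- There exists a constant C > 0 such that for all x, y > 0 with x + y > 1, |x − y| ≤ 1/8 and x ≠ y, one has |T₁(x,y)| ≤ C. -/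
open MeasureTheory Real Set

lemma inv_sub_inv_sinh_mem_Icc {t : ℝ} (ht : 0 < t) :
    1 / t - 1 / Real.sinh t ∈ Set.Icc (0 : ℝ) 1 := by
  have hs : 0 < Real.sinh t := Real.sinh_pos_iff.2 ht
  have hle : t ≤ Real.sinh t := Real.self_le_sinh_iff.2 ht.le
  have key : (1 - t) * Real.sinh t ≤ t := by
    have h1 : (1 - t) * Real.sinh t ≤ Real.exp (-t) * Real.sinh t :=
      mul_le_mul_of_nonneg_right (Real.one_sub_le_exp_neg t) hs.le
    have h2 : Real.exp (-t) * Real.sinh t = (1 - Real.exp (-(2 * t))) / 2 := by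
      have h3 : Real.exp (-t) * Real.exp t = 1 := by rw [← Real.exp_add]; simp
      have h4 : Real.exp (-t) * Real.exp (-t) = Real.exp (-(2 * t)) := by
        rw [← Real.exp_add]; ring_nf
      rw [Real.sinh_eq]
      linear_combination h3 / 2 - h4 / 2
    linarith [Real.one_sub_le_exp_neg (2 * t)]
  refine ⟨sub_nonneg.2 (one_div_le_one_div_of_le ht hle), ?_⟩
  rw [div_sub_div _ _ ht.ne' hs.ne', div_le_one (by positivity)]
  linarith

theorem T1_bound_near_diagonal :
    ∃ C : ℝ, 0 < C ∧ ∀ x y : ℝ, 0 < x → 0 < y → 1 < x + y → |x - y| ≤ 1 / 8 →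
      x ≠ y → |T1 x y| ≤ C := by
  refine ⟨2, two_pos, fun x y hx hy hxy hd hne => ?_⟩
  have hsq : 0 < |x ^ 2 - y ^ 2| :=
    abs_pos.2 (sub_ne_zero.2 fun h => hne ((sq_eq_sq₀ hx.le hy.le).1 h))
  obtain ⟨a0, a1⟩ := inv_sub_inv_sinh_mem_Icc hsq
  obtain ⟨b0, b1⟩ := inv_sub_inv_sinh_mem_Icc (show 0 < x ^ 2 + y ^ 2 by positivity)
  have hratio : y / x ≤ 2 := by
    rw [div_le_iff₀ hx]
    linarith [(abs_le.1 hd).1]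
  rw [T1, abs_mul, abs_of_pos (div_pos hy hx), ← mul_one (2 : ℝ)]
  exact mul_le_mul hratio (abs_le.2 ⟨by linarith, by linarith⟩) (abs_nonneg _) two_pos.le
end

section
/- There exists a constant C > 0 such that for every x > 1 and every y with 0 < y < x/2 one has |T₁(x,y)| ≤ C·(y/x)·( 1/sinh(3x²/4) + y²/x⁴ ). -/
open MeasureTheory Real Set

theorem T1_bound_below_diagonal :
    ∃ C : ℝ, 0 < C ∧ ∀ x y : ℝ, 1 < x → 0 < y → y < x / 2 →
      |T1 x y| ≤ C * (y / x) * (1 / Real.sinh (3 * x ^ 2 / 4) + y ^ 2 / x ^ 4) := by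
  refine ⟨3, by norm_num, fun x y hx hy hyx => ?_⟩
  have hx0 : 0 < x := by linarith
  have hy2 : y ^ 2 ≤ x ^ 2 / 4 := by nlinarith
  have hx2 : 0 < x ^ 2 := by positivity
  have ha : 3 * x ^ 2 / 4 ≤ x ^ 2 - y ^ 2 := by linarith
  have ha0 : 0 < x ^ 2 - y ^ 2 := by linarith
  have hb : x ^ 2 - y ^ 2 ≤ x ^ 2 + y ^ 2 := by nlinarith
  have hb0 : 0 < x ^ 2 + y ^ 2 := by positivity
  have hsinh : 0 < Real.sinh (3 * x ^ 2 / 4) := Real.sinh_pos_iff.mpr (by positivity)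
  have hsinh_a : 0 < Real.sinh (x ^ 2 - y ^ 2) := Real.sinh_pos_iff.mpr ha0
  have hsinh_b : 0 < 1 / Real.sinh (x ^ 2 + y ^ 2) :=
    one_div_pos.mpr (Real.sinh_pos_iff.mpr hb0)
  have hinv_a : 1 / Real.sinh (x ^ 2 - y ^ 2) ≤ 1 / Real.sinh (3 * x ^ 2 / 4) :=
    one_div_le_one_div_of_le hsinh (Real.sinh_le_sinh.mpr ha)
  have hinv_b : 1 / Real.sinh (x ^ 2 + y ^ 2) ≤ 1 / Real.sinh (x ^ 2 - y ^ 2) :=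
    one_div_le_one_div_of_le hsinh_a (Real.sinh_le_sinh.mpr hb)
  have hdiff : 1 / (x ^ 2 - y ^ 2) - 1 / (x ^ 2 + y ^ 2) ≤ 3 * (y ^ 2 / x ^ 4) := by
    have heq : 1 / (x ^ 2 - y ^ 2) - 1 / (x ^ 2 + y ^ 2)
        = 2 * y ^ 2 / ((x ^ 2 - y ^ 2) * (x ^ 2 + y ^ 2)) := by
      field_simp
      ring
    rw [heq, ← mul_div_assoc, div_le_div_iff₀ (by positivity) (by positivity)]
    have hprod : 2 * x ^ 4 ≤ 3 * ((x ^ 2 - y ^ 2) * (x ^ 2 + y ^ 2)) := by nlinarith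
    nlinarith [mul_le_mul_of_nonneg_left hprod (sq_nonneg y)]
  have hdiff0 : 1 / (x ^ 2 + y ^ 2) ≤ 1 / (x ^ 2 - y ^ 2) := one_div_le_one_div_of_le ha0 hb
  have hS : 0 < 1 / Real.sinh (3 * x ^ 2 / 4) := one_div_pos.mpr hsinh
  have hq : 0 ≤ y ^ 2 / x ^ 4 := by positivity
  rw [T1, abs_of_pos ha0, abs_mul, abs_of_pos (div_pos hy hx0), mul_comm (3 : ℝ), mul_assoc]
  refine mul_le_mul_of_nonneg_left (abs_le.mpr ⟨?_, ?_⟩) (div_pos hy hx0).le <;> linarith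
end

section
/- For every R > 0 there exists a constant C > 0 such that for all x, y ∈ (0, R) with x ≠ y one has |T₂(x,y)| ≤ C. -/
open MeasureTheory Real Set

/-- `T₂(x,y) = (y³/x³)·(sinh(x²)/sinh(y²) − x²/y²)·(1/sinh|x²−y²| − 1/sinh(x²+y²))`. -/
noncomputable def T2 (x y : ℝ) : ℝ :=
  (y ^ 3 / x ^ 3) * (Real.sinh (x ^ 2) / Real.sinh (y ^ 2) - x ^ 2 / y ^ 2) *
    (1 / Real.sinh |x ^ 2 - y ^ 2| - 1 / Real.sinh (x ^ 2 + y ^ 2))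

lemma sinh_le_mul_cosh_s5 {t : ℝ} (ht : 0 ≤ t) : sinh t ≤ t * cosh t := by
  have hd (s : ℝ) : HasDerivAt (fun s => s * cosh s - sinh s) (s * sinh s) s :=
    (((hasDerivAt_id s).mul (hasDerivAt_cosh s)).sub (hasDerivAt_sinh s)).congr_deriv (by simp)
  have hm : MonotoneOn (fun s : ℝ => s * cosh s - sinh s) (Ici 0) := by
    refine monotoneOn_of_deriv_nonneg (convex_Ici 0)
      (fun s _ => (hd s).continuousAt.continuousWithinAt)
      (fun s _ => (hd s).differentiableAt.differentiableWithinAt) fun s hs => ?_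
    rw [interior_Ici, mem_Ioi] at hs
    rw [(hd s).deriv]
    exact mul_nonneg hs.le (sinh_nonneg_iff.2 hs.le)
  have := hm self_mem_Ici ht ht
  simp only [zero_mul, sinh_zero, sub_zero] at this
  linarith

lemma mul_cosh_sub_sinh_le {t : ℝ} (ht : 0 ≤ t) : t * cosh t - sinh t ≤ t ^ 3 * cosh t := by
  have h1 : cosh t - 1 ≤ t * sinh t := by
    have hs := sinh_le_mul_cosh_s5 (div_nonneg ht zero_le_two)
    have hs0 : 0 ≤ sinh (t / 2) := sinh_nonneg_iff.2 (div_nonneg ht zero_le_two)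
    have hc0 := cosh_pos (t / 2)
    have hcosh := cosh_two_mul (t / 2)
    have hsinh := sinh_two_mul (t / 2)
    have hsq := cosh_sq (t / 2)
    rw [mul_div_cancel₀ t two_ne_zero] at hcosh hsinh
    rw [hcosh, hsinh, hsq]
    nlinarith [mul_le_mul_of_nonneg_left hs hs0, mul_nonneg (mul_nonneg ht hs0) hc0.le]
  have h2 := mul_le_mul_of_nonneg_left (sinh_le_mul_cosh_s5 ht) ht
  nlinarith [self_le_sinh_iff.2 ht, mul_le_mul_of_nonneg_left (h1.trans h2) ht]

lemma abs_sinh_div_sub_sinh_div_le {M a b : ℝ} (ha : a ∈ Ioo 0 M) (hb : b ∈ Ioo 0 M) :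
    |sinh a / a - sinh b / b| ≤ cosh M / 2 * |a ^ 2 - b ^ 2| := by
  wlog hab : b ≤ a generalizing a b
  · rw [abs_sub_comm, abs_sub_comm (a ^ 2)]
    exact this hb ha (le_of_not_ge hab)
  have hd (s : ℝ) (hs : s ∈ Ioo 0 M) :
      HasDerivAt (fun s => sinh s / s) ((cosh s * s - sinh s) / s ^ 2) s :=
    ((hasDerivAt_sinh s).div (hasDerivAt_id s) hs.1.ne').congr_deriv (by simp)
  have hd' (s : ℝ) (hs : s ∈ Ioo 0 M) :
      HasDerivAt (fun s => cosh M / 2 * s ^ 2 - sinh s / s)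
        (cosh M * s - (cosh s * s - sinh s) / s ^ 2) s :=
    (((hasDerivAt_pow 2 s).const_mul (cosh M / 2)).sub (hd s hs)).congr_deriv
      (by norm_num; ring)
  have hmono : MonotoneOn (fun s => sinh s / s) (Ioo 0 M) := by
    refine monotoneOn_of_deriv_nonneg (convex_Ioo 0 M)
      (fun s hs => (hd s hs).continuousAt.continuousWithinAt)
      (fun s hs => (hd s (interior_subset hs)).differentiableAt.differentiableWithinAt)
      fun s hs => ?_
    rw [interior_Ioo] at hs
    rw [(hd s hs).deriv]
    exact div_nonneg (by linarith [sinh_le_mul_cosh_s5 hs.1.le]) (sq_nonneg s)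
  have hmono' : MonotoneOn (fun s => cosh M / 2 * s ^ 2 - sinh s / s) (Ioo 0 M) := by
    refine monotoneOn_of_deriv_nonneg (convex_Ioo 0 M)
      (fun s hs => (hd' s hs).continuousAt.continuousWithinAt)
      (fun s hs => (hd' s (interior_subset hs)).differentiableAt.differentiableWithinAt)
      fun s hs => ?_
    rw [interior_Ioo] at hs
    rw [(hd' s hs).deriv, sub_nonneg, div_le_iff₀ (pow_pos hs.1 2)]
    have hc : cosh s ≤ cosh M := cosh_le_cosh.2 (abs_le_abs_of_nonneg hs.1.le hs.2.le)
    have := mul_le_mul_of_nonneg_left hc (pow_pos hs.1 3).le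
    nlinarith [mul_cosh_sub_sinh_le hs.1.le]
  have h1 := hmono hb ha hab
  have h2 := hmono' hb ha hab
  simp only at h1 h2
  rw [abs_of_nonneg (sub_nonneg.2 h1),
    abs_of_nonneg (sub_nonneg.2 (pow_le_pow_left₀ hb.1.le hab 2))]
  linarith

lemma abs_inv_sinh_sub_inv_sinh_mul_le {M a b : ℝ} (ha : a ∈ Ioo 0 M) (hb : b ∈ Ioo 0 M)
    (hab : a ≠ b) :
    |1 / sinh |a - b| - 1 / sinh (a + b)| * |a ^ 2 - b ^ 2| ≤ 2 * cosh M ^ 2 * min a b := by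
  wlog h : b < a generalizing a b
  · rw [abs_sub_comm a, abs_sub_comm (a ^ 2), add_comm, min_comm]
    exact this hb ha hab.symm (lt_of_le_of_ne (le_of_not_gt h) hab)
  obtain ⟨ha0, haM⟩ := ha
  obtain ⟨hb0, hbM⟩ := hb
  have hc {s : ℝ} (hs : 0 < s) (hM : s < M) : cosh s ≤ cosh M :=
    cosh_le_cosh.2 (abs_le_abs_of_nonneg hs.le hM.le)
  have hp : 0 < a - b := sub_pos.2 h
  have hq : 0 < a + b := by positivity
  have hsp := sinh_pos_iff.2 hp
  have hsq := sinh_pos_iff.2 hq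
  have hnum : sinh (a + b) - sinh (a - b) = 2 * cosh a * sinh b := by
    rw [sinh_add, sinh_sub]; ring
  have hsb := sinh_pos_iff.2 hb0
  have hsq2 : a ^ 2 - b ^ 2 = (a - b) * (a + b) := by ring
  have hnum_le : 2 * cosh a * sinh b ≤ 2 * cosh M ^ 2 * b := by
    calc 2 * cosh a * sinh b ≤ 2 * cosh M * (b * cosh M) := by
          gcongr
          · exact hc ha0 haM
          · exact (sinh_le_mul_cosh_s5 hb0.le).trans (by gcongr; exact hc hb0 hbM)
      _ = _ := by ring
  rw [abs_of_pos hp, div_sub_div _ _ hsp.ne' hsq.ne', one_mul, mul_one, hnum, min_eq_right h.le,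
    hsq2, abs_of_pos (mul_pos hp hq), abs_of_nonneg (by positivity), div_mul_eq_mul_div,
    div_le_iff₀ (mul_pos hsp hsq)]
  gcongr
  · exact self_le_sinh_iff.2 hp.le
  · exact self_le_sinh_iff.2 hq.le

theorem T2_bound_small (R : ℝ) (hR : 0 < R) :
    ∃ C : ℝ, 0 < C ∧ ∀ x y : ℝ, x ∈ Set.Ioo (0 : ℝ) R → y ∈ Set.Ioo (0 : ℝ) R →
      x ≠ y → |T2 x y| ≤ C := by
  refine ⟨cosh (R ^ 2) ^ 3 * R ^ 2, by positivity, ?_⟩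
  rintro x y ⟨hx, hxR⟩ ⟨hy, hyR⟩ hxy
  have ha : x ^ 2 ∈ Ioo 0 (R ^ 2) := ⟨by positivity, by gcongr⟩
  have hb : y ^ 2 ∈ Ioo 0 (R ^ 2) := ⟨by positivity, by gcongr⟩
  have hab : x ^ 2 ≠ y ^ 2 := fun h => hxy ((pow_left_inj₀ hx.le hy.le two_ne_zero).1 h)
  have h1 := abs_sinh_div_sub_sinh_div_le ha hb
  have h2 := abs_inv_sinh_sub_inv_sinh_mul_le ha hb hab
  have hsb : 0 < sinh (y ^ 2) := sinh_pos_iff.2 hb.1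
  have hle : y ^ 2 ≤ sinh (y ^ 2) := self_le_sinh_iff.2 hb.1.le
  have hmin : min (x ^ 2) (y ^ 2) ≤ x * y := by
    rcases le_total x y with h | h
    · exact (min_le_left _ _).trans (by nlinarith)
    · exact (min_le_right _ _).trans (by nlinarith)
  have hfac : sinh (x ^ 2) / sinh (y ^ 2) - x ^ 2 / y ^ 2 =
      x ^ 2 / sinh (y ^ 2) * (sinh (x ^ 2) / x ^ 2 - sinh (y ^ 2) / y ^ 2) := by
    field_simp
  rw [T2, hfac, abs_mul, abs_mul, abs_mul, abs_of_pos (by positivity : 0 < y ^ 3 / x ^ 3),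
    abs_of_pos (by positivity : 0 < x ^ 2 / sinh (y ^ 2))]
  set D := |1 / sinh |x ^ 2 - y ^ 2| - 1 / sinh (x ^ 2 + y ^ 2)|
  have hD : 0 ≤ D := abs_nonneg _
  calc
    _ ≤ y ^ 3 / x ^ 3 *
        (x ^ 2 / y ^ 2 * (cosh (R ^ 2) / 2 * |(x ^ 2) ^ 2 - (y ^ 2) ^ 2|)) * D := by
        gcongr
    _ = y / x * (cosh (R ^ 2) / 2) * (D * |(x ^ 2) ^ 2 - (y ^ 2) ^ 2|) := by
        field_simp
    _ ≤ y / x * (cosh (R ^ 2) / 2) * (2 * cosh (R ^ 2) ^ 2 * (x * y)) := by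
        refine mul_le_mul_of_nonneg_left (h2.trans ?_) (by positivity)
        gcongr
    _ = cosh (R ^ 2) ^ 3 * y ^ 2 := by
        field_simp
    _ ≤ _ := by gcongr
end

section
/- For every δ > 0 there exists a constant C > 0 such that for every x ∈ (0,1) and every y > x + δ one has |T₂(x,y)| ≤ C·x·y/sinh(y²). -/
open MeasureTheory Real Set

theorem sinh_le_two_mul_of_le_one {a : ℝ} (h0 : 0 ≤ a) (h1 : a ≤ 1) : Real.sinh a ≤ 2 * a := by
  have h := (abs_le.1 (Real.abs_exp_sub_one_sub_id_le (abs_le.2 ⟨by linarith, h1⟩))).2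
  have h' := Real.add_one_le_exp (-a)
  rw [Real.sinh_eq]
  nlinarith

theorem abs_sinh_div_sinh_sub_div_le {a b : ℝ} (h0 : 0 < a) (h1 : a ≤ 1) (hb : 0 < b) :
    |Real.sinh a / Real.sinh b - a / b| ≤ 2 * (a / b) := by
  have hsb := Real.sinh_pos_iff.2 hb
  have hsa := Real.sinh_pos_iff.2 h0
  have hle : Real.sinh a / Real.sinh b ≤ 2 * a / b :=
    div_le_div₀ (by positivity) (sinh_le_two_mul_of_le_one h0.le h1) hb
      (Real.self_le_sinh_iff.2 hb.le)
  have hpos : 0 < Real.sinh a / Real.sinh b := by positivity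
  have hab : 0 < a / b := by positivity
  rw [mul_div_assoc] at hle
  rw [abs_le]
  constructor <;> linarith

theorem cosh_le_mul_sinh_of_le {d t : ℝ} (hd : 0 < d) (ht : d ≤ t) :
    Real.cosh t ≤ (1 + 1 / Real.sinh d) * Real.sinh t := by
  have hsd := Real.sinh_pos_iff.2 hd
  have h1 : 1 ≤ 1 / Real.sinh d * Real.sinh t := by
    rw [one_div_mul_eq_div, one_le_div hsd]
    exact Real.sinh_le_sinh.2 ht
  have h2 := Real.cosh_sub_sinh t
  have h3 : Real.exp (-t) ≤ 1 := Real.exp_le_one_iff.2 (by linarith)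
  linarith

theorem cosh_le_mul_sinh_sub {a b d : ℝ} (hd : 0 < d) (h0 : 0 ≤ a) (h1 : a ≤ 1)
    (hab : a + d ≤ b) :
    Real.cosh b ≤ ((1 + 1 / Real.sinh d) * Real.cosh 1 + 2) * Real.sinh (b - a) := by
  have ht := cosh_le_mul_sinh_of_le hd (show d ≤ b - a by linarith)
  have hs : 0 < Real.sinh (b - a) := Real.sinh_pos_iff.2 (by linarith)
  have hca : Real.cosh a ≤ Real.cosh 1 :=
    Real.cosh_le_cosh.2 (by rwa [abs_of_nonneg h0, abs_one])
  have hsa : Real.sinh a ≤ 2 := (sinh_le_two_mul_of_le_one h0 h1).trans (by linarith)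
  calc Real.cosh b = Real.cosh (b - a) * Real.cosh a + Real.sinh (b - a) * Real.sinh a := by
        rw [← Real.cosh_add, sub_add_cancel]
    _ ≤ (1 + 1 / Real.sinh d) * Real.sinh (b - a) * Real.cosh 1 + Real.sinh (b - a) * 2 := by
        have := Real.cosh_pos a
        gcongr
    _ = _ := by ring

/-- The two reciprocals of `sinh` nearly cancel when `a` is small and `b - a` is bounded below. -/
theorem abs_inv_sinh_sub_inv_sinh_le {a b d : ℝ} (hd : 0 < d) (h0 : 0 < a) (h1 : a ≤ 1)
    (hab : a + d ≤ b) :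
    |1 / Real.sinh (b - a) - 1 / Real.sinh (a + b)| ≤
      4 * ((1 + 1 / Real.sinh d) * Real.cosh 1 + 2) * a / Real.sinh b := by
  have hs : 0 < Real.sinh (b - a) := Real.sinh_pos_iff.2 (by linarith)
  have hp : 0 < Real.sinh (a + b) := Real.sinh_pos_iff.2 (by linarith)
  have hb : 0 < Real.sinh b := Real.sinh_pos_iff.2 (by linarith)
  have ha : 0 < Real.sinh a := Real.sinh_pos_iff.2 h0
  have hd' := Real.sinh_pos_iff.2 hd
  have hc := Real.cosh_pos b
  have hc1 := Real.cosh_pos 1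
  have hbp : Real.sinh b ≤ Real.sinh (a + b) := Real.sinh_le_sinh.2 (by linarith)
  have hK := cosh_le_mul_sinh_sub hd h0.le h1 hab
  have hsa := sinh_le_two_mul_of_le_one h0.le h1
  set K := (1 + 1 / Real.sinh d) * Real.cosh 1 + 2
  have hKpos : 0 < K := by positivity
  have heq : 1 / Real.sinh (b - a) - 1 / Real.sinh (a + b) =
      2 * Real.cosh b * Real.sinh a / (Real.sinh (b - a) * Real.sinh (a + b)) := by
    rw [div_sub_div _ _ hs.ne' hp.ne', Real.sinh_add, Real.sinh_sub]
    ring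
  rw [heq, abs_of_pos (by positivity)]
  calc 2 * Real.cosh b * Real.sinh a / (Real.sinh (b - a) * Real.sinh (a + b))
      ≤ 2 * (K * Real.sinh (b - a)) * (2 * a) / (Real.sinh (b - a) * Real.sinh b) := by gcongr
    _ = 4 * K * a / Real.sinh b := by
        field_simp
        ring

theorem T2_bound_far (δ : ℝ) (hδ : 0 < δ) :
    ∃ C : ℝ, 0 < C ∧ ∀ x y : ℝ, x ∈ Set.Ioo (0 : ℝ) 1 → x + δ < y →
      |T2 x y| ≤ C * x * y / Real.sinh (y ^ 2) := by
  have hd : 0 < δ ^ 2 := by positivity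
  have hsd := Real.sinh_pos_iff.2 hd
  have hc1 := Real.cosh_pos 1
  refine ⟨8 * ((1 + 1 / Real.sinh (δ ^ 2)) * Real.cosh 1 + 2), by positivity, ?_⟩
  rintro x y ⟨hx0, hx1⟩ hxy
  have hy : 0 < y := by linarith
  have ha0 : 0 < x ^ 2 := by positivity
  have hb0 : 0 < y ^ 2 := by positivity
  have ha1 : x ^ 2 ≤ 1 := by nlinarith
  have hab : x ^ 2 + δ ^ 2 ≤ y ^ 2 := by nlinarith [mul_pos hx0 hδ]
  have hsb := Real.sinh_pos_iff.2 hb0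
  have h1 := abs_sinh_div_sinh_sub_div_le ha0 ha1 hb0
  have h2 := abs_inv_sinh_sub_inv_sinh_le hd ha0 ha1 hab
  have habs : |x ^ 2 - y ^ 2| = y ^ 2 - x ^ 2 := by
    rw [abs_sub_comm, abs_of_nonneg (by linarith)]
  rw [T2, habs, abs_mul, abs_mul, abs_of_pos (show 0 < y ^ 3 / x ^ 3 by positivity)]
  set K := (1 + 1 / Real.sinh (δ ^ 2)) * Real.cosh 1 + 2
  calc _ ≤ y ^ 3 / x ^ 3 * (2 * (x ^ 2 / y ^ 2)) * (4 * K * x ^ 2 / Real.sinh (y ^ 2)) := by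
        gcongr
    _ = 8 * K * x * y / Real.sinh (y ^ 2) := by
        field_simp
        ring
end
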